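/- With probability at least 1-δ over the draw of the dataset, the policy ĥπ_n = argmax_{π∈Π} ṽ_n(π) returned by PIWO-IX satisfies, simultaneously for every comparator policy π* ∈ Π, the regret bound v(π*) - v(ĥπ_n) ≤ log(2|Π|/δ)/(γn) + 2γ·C_γ(π*). -/

import Mathlib

/-!
Write `h = ± 2γ · π(A|X) R / (μ(A|X) + γ)` for a scaled IX estimate of one observation. In both
cases there is a bounded `d(x,a)` such that, for every reward `ρ ∈ [0,1]`,
`μ(a|x) · exp h(x,a,ρ) ≤ μ(a|x) + d(x,a) ρ`:

* for the sign `+`, `d = 2γπ`, from `2z/(z+2) ≤ log (1+z)` (`mul_exp_ix_le`);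
* for the sign `-`, `d = -2γπ + 4γ²π/(μ+γ)`, from `exp (-y) ≤ 1 - y + y²/2`
  (`mul_exp_neg_ix_le`).

Integrating such a bound over the law of `(X, A, R)` gives
`E[exp h] ≤ 1 + E[∑ₐ d r] ≤ exp (E[∑ₐ d r])` (`lintegral_exp_obsLaw_le`), and independence together
with Markov's inequality gives `P(∑ₜ h(Dₜ) ≥ n E[∑ₐ d r] + L) ≤ exp (-L)` (`dataLaw_tail_le`).
With `L = log (2|Π|/δ)` and a union bound over `Π` and the two signs, outside an event of
probability at most `δ`, all `π ∈ Π` satisfy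
`ṽ(π) ≤ v(π) + L/(2γn)` and `v(π) ≤ ṽ(π) + L/(2γn) + 2γ C_γ(π)`.
Applying the first to the maximiser of `ṽ` and the second to the comparator yields the regret bound.
-/

open MeasureTheory ProbabilityTheory

/-- A stochastic contextual bandit instance: context distribution `ν`, behavior policy `μb`,
reward kernel `rker` supported on `[0,1]`, and mean reward function `r`. -/
structure CBSetup (𝓧 𝓐 : Type*) [MeasurableSpace 𝓧] [Fintype 𝓐] [MeasurableSpace 𝓐] where
  /-- the context distribution -/
  ν : Measure 𝓧
  ν_prob : IsProbabilityMeasure ν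
  /-- the behavior policy `μ(a|x)` -/
  μb : 𝓧 → 𝓐 → ℝ
  μb_nonneg : ∀ x a, 0 ≤ μb x a
  μb_sum_one : ∀ x, ∑ a, μb x a = 1
  μb_meas : ∀ a, Measurable fun x => μb x a
  /-- the reward kernel `p(·|x,a)` -/
  rker : 𝓧 → 𝓐 → Measure ℝ
  rker_prob : ∀ x a, IsProbabilityMeasure (rker x a)
  rker_supp : ∀ x a, rker x a (Set.Icc (0:ℝ) 1)ᶜ = 0
  rker_meas : ∀ a, Measurable fun x => rker x a
  /-- the mean reward `r(x,a)` -/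
  r : 𝓧 → 𝓐 → ℝ
  r_def : ∀ x a, r x a = ∫ ρ, ρ ∂(rker x a)
  r_meas : ∀ a, Measurable fun x => r x a

variable {𝓧 𝓐 : Type*} [MeasurableSpace 𝓧] [Fintype 𝓐] [MeasurableSpace 𝓐]
  [MeasurableSingletonClass 𝓐]

/-- The law of a single observation `(X, A, R)` with `X ~ ν`, `A ~ μ(·|X)`, `R ~ p(·|X,A)`. -/
noncomputable def obsLaw (S : CBSetup 𝓧 𝓐) : Measure (𝓧 × 𝓐 × ℝ) :=
  S.ν.bind fun x => Measure.sum fun a =>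
    ENNReal.ofReal (S.μb x a) • (S.rker x a).map fun ρ => (x, a, ρ)

/-- The law of the i.i.d. dataset `(X_t, A_t, R_t)_{t=1}^n`. -/
noncomputable def dataLaw (S : CBSetup 𝓧 𝓐) (n : ℕ) : Measure (Fin n → 𝓧 × 𝓐 × ℝ) :=
  Measure.pi fun _ : Fin n => obsLaw S

/-- A (stochastic, measurable) policy: a map from contexts to distributions over actions. -/
def IsPolicy (π : 𝓧 → 𝓐 → ℝ) : Prop :=
  (∀ x a, 0 ≤ π x a) ∧ (∀ x, ∑ a, π x a = 1) ∧ (∀ a, Measurable fun x => π x a)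

/-- The value `v(π) = E[Σ_a π(a|X) r(X,a)]` of a policy. -/
noncomputable def pval (S : CBSetup 𝓧 𝓐) (π : 𝓧 → 𝓐 → ℝ) : ℝ :=
  ∫ x, ∑ a, π x a * S.r x a ∂S.ν

/-- The smoothed coverage ratio `C_γ(π) = E[Σ_a π(a|X) r(X,a)/(μ(a|X)+γ)]`. -/
noncomputable def covγ (S : CBSetup 𝓧 𝓐) (γ : ℝ) (π : 𝓧 → 𝓐 → ℝ) : ℝ :=
  ∫ x, ∑ a, π x a * S.r x a / (S.μb x a + γ) ∂S.ν

/-- The IX reward estimate `r̃(π) = π(A|X) R / (μ(A|X) + γ)` for one observation `ω = (X,A,R)`. -/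
noncomputable def ixTerm (S : CBSetup 𝓧 𝓐) (γ : ℝ) (π : 𝓧 → 𝓐 → ℝ) (ω : 𝓧 × 𝓐 × ℝ) : ℝ :=
  π ω.1 ω.2.1 * ω.2.2 / (S.μb ω.1 ω.2.1 + γ)

/-- The IX value estimator `ṽ_n(π) = (1/n) Σ_t π(A_t|X_t) R_t / (μ(A_t|X_t) + γ)`. -/
noncomputable def ixEst (S : CBSetup 𝓧 𝓐) (γ : ℝ) {n : ℕ} (π : 𝓧 → 𝓐 → ℝ)
    (D : Fin n → 𝓧 × 𝓐 × ℝ) : ℝ :=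
  (∑ t, ixTerm S γ π (D t)) / n

/-! ### The law of one observation -/

lemma measurable_obs_kernel (S : CBSetup 𝓧 𝓐) :
    Measurable fun x => Measure.sum fun a =>
      ENNReal.ofReal (S.μb x a) • (S.rker x a).map fun ρ => (x, a, ρ) := by
  refine Measure.measurable_of_measurable_coe _ fun s hs => ?_
  have key : ∀ x, (Measure.sum fun a =>
      ENNReal.ofReal (S.μb x a) • (S.rker x a).map fun ρ => (x, a, ρ)) s =
      ∑ a, ENNReal.ofReal (S.μb x a) * S.rker x a ((fun ρ => (x, a, ρ)) ⁻¹' s) := by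
    intro x
    rw [Measure.sum_apply _ hs, tsum_fintype]
    refine Finset.sum_congr rfl fun a _ => ?_
    rw [Measure.smul_apply, smul_eq_mul, Measure.map_apply (by fun_prop) hs]
  simp_rw [key]
  refine Finset.measurable_sum _ fun a _ => (S.μb_meas a).ennreal_ofReal.mul ?_
  let κ : Kernel 𝓧 ℝ := ⟨fun x => S.rker x a, S.rker_meas a⟩
  have : IsMarkovKernel κ := ⟨fun x => S.rker_prob x a⟩
  have hs' : MeasurableSet ((fun p : 𝓧 × ℝ => (p.1, a, p.2)) ⁻¹' s) :=
    hs.preimage (by fun_prop)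
  exact Kernel.measurable_kernel_prodMk_left (κ := κ) hs'

lemma lintegral_obsLaw (S : CBSetup 𝓧 𝓐) {f : 𝓧 × 𝓐 × ℝ → ENNReal} (hf : Measurable f) :
    ∫⁻ ω, f ω ∂obsLaw S =
      ∫⁻ x, ∑ a, ENNReal.ofReal (S.μb x a) * ∫⁻ ρ, f (x, a, ρ) ∂S.rker x a ∂S.ν := by
  rw [obsLaw, Measure.lintegral_bind (measurable_obs_kernel S).aemeasurable hf.aemeasurable]
  refine lintegral_congr fun x => ?_
  rw [lintegral_sum_measure, tsum_fintype]
  refine Finset.sum_congr rfl fun a _ => ?_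
  rw [lintegral_smul_measure, smul_eq_mul, lintegral_map hf (by fun_prop)]

lemma isProbabilityMeasure_obsLaw (S : CBSetup 𝓧 𝓐) : IsProbabilityMeasure (obsLaw S) := by
  have := S.ν_prob
  have := S.rker_prob
  refine ⟨?_⟩
  rw [← lintegral_one, lintegral_obsLaw S measurable_const]
  have h : ∀ x, ∑ a, ENNReal.ofReal (S.μb x a) = 1 := fun x => by
    rw [← ENNReal.ofReal_sum_of_nonneg fun a _ => S.μb_nonneg x a, S.μb_sum_one, ENNReal.ofReal_one]
  simp [h]

lemma ae_rker_mem_Icc (S : CBSetup 𝓧 𝓐) (x : 𝓧) (a : 𝓐) :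
    ∀ᵐ ρ ∂S.rker x a, ρ ∈ Set.Icc (0 : ℝ) 1 :=
  S.rker_supp x a

lemma integrable_id_rker (S : CBSetup 𝓧 𝓐) (x : 𝓧) (a : 𝓐) :
    Integrable (fun ρ : ℝ => ρ) (S.rker x a) := by
  have := S.rker_prob x a
  refine Integrable.of_bound measurable_id.aestronglyMeasurable 1 ?_
  filter_upwards [ae_rker_mem_Icc S x a] with ρ hρ
  rw [Real.norm_eq_abs, abs_of_nonneg hρ.1]
  exact hρ.2

lemma r_mem_Icc (S : CBSetup 𝓧 𝓐) (x : 𝓧) (a : 𝓐) : S.r x a ∈ Set.Icc (0 : ℝ) 1 := by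
  have := S.rker_prob x a
  rw [S.r_def]
  constructor
  · exact integral_nonneg_of_ae ((ae_rker_mem_Icc S x a).mono fun ρ hρ => hρ.1)
  · have h := integral_mono_ae (integrable_id_rker S x a) (integrable_const (1 : ℝ))
      ((ae_rker_mem_Icc S x a).mono fun ρ hρ => hρ.2)
    simpa using h

lemma integrable_sum_mul_r (S : CBSetup 𝓧 𝓐) {d : 𝓧 → 𝓐 → ℝ}
    (hd : ∀ a, Measurable fun x => d x a) {M : ℝ} (hM : ∀ x a, |d x a| ≤ M) :
    Integrable (fun x => ∑ a, d x a * S.r x a) S.ν := by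
  have := S.ν_prob
  refine integrable_finsetSum _ fun a _ => ?_
  refine Integrable.of_bound ((hd a).mul (S.r_meas a)).aestronglyMeasurable M ?_
  filter_upwards with x
  have hr := r_mem_Icc S x a
  rw [Real.norm_eq_abs, abs_mul, abs_of_nonneg hr.1]
  exact (mul_le_of_le_one_right (abs_nonneg _) hr.2).trans (hM x a)

/-! ### Exponential moments and tails -/

/-- A pointwise bound on `μ · exp h` that is affine in the reward controls the exponential moment of
`h`: the weight `μ` absorbs the importance weight, so no lower bound on `μ` is needed. -/
lemma lintegral_exp_obsLaw_le (S : CBSetup 𝓧 𝓐) {h : 𝓧 × 𝓐 × ℝ → ℝ} (hh : Measurable h)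
    {d : 𝓧 → 𝓐 → ℝ} (hd : ∀ a, Measurable fun x => d x a) {M : ℝ} (hM : ∀ x a, |d x a| ≤ M)
    (hle : ∀ x a, ∀ ρ ∈ Set.Icc (0 : ℝ) 1,
      S.μb x a * Real.exp (h (x, a, ρ)) ≤ S.μb x a + d x a * ρ) :
    ∫⁻ ω, ENNReal.ofReal (Real.exp (h ω)) ∂obsLaw S ≤
      ENNReal.ofReal (Real.exp (∫ x, ∑ a, d x a * S.r x a ∂S.ν)) := by
  have := S.ν_prob
  have hnn : ∀ x a, ∀ ρ ∈ Set.Icc (0 : ℝ) 1, 0 ≤ S.μb x a + d x a * ρ := fun x a ρ hρ =>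
    (mul_nonneg (S.μb_nonneg x a) (Real.exp_pos _).le).trans (hle x a ρ hρ)
  have hinner : ∀ x a, ENNReal.ofReal (S.μb x a) *
      ∫⁻ ρ, ENNReal.ofReal (Real.exp (h (x, a, ρ))) ∂S.rker x a ≤
      ENNReal.ofReal (S.μb x a + d x a * S.r x a) := by
    intro x a
    have := S.rker_prob x a
    have h_int := (integrable_id_rker S x a).const_mul (d x a)
    have hval : S.μb x a + d x a * S.r x a = ∫ ρ, (S.μb x a + d x a * ρ) ∂S.rker x a := by
      rw [integral_add (integrable_const _) h_int, integral_const_mul, ← S.r_def]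
      simp
    have h_int_add : Integrable (fun ρ => S.μb x a + d x a * ρ) (S.rker x a) :=
      (integrable_const _).add h_int
    rw [hval, ofReal_integral_eq_lintegral_ofReal h_int_add
      ((ae_rker_mem_Icc S x a).mono fun ρ hρ => hnn x a ρ hρ), ← lintegral_const_mul _ (by fun_prop)]
    refine lintegral_mono_ae ((ae_rker_mem_Icc S x a).mono fun ρ hρ => ?_)
    rw [← ENNReal.ofReal_mul (S.μb_nonneg x a)]
    exact ENNReal.ofReal_le_ofReal (hle x a ρ hρ)
  have hnn' : ∀ x a, 0 ≤ S.μb x a + d x a * S.r x a := fun x a => hnn x a _ (r_mem_Icc S x a)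
  have hsum : ∀ x, ∑ a, (S.μb x a + d x a * S.r x a) = 1 + ∑ a, d x a * S.r x a := fun x => by
    rw [Finset.sum_add_distrib, S.μb_sum_one]
  have h_int := integrable_sum_mul_r S hd hM
  have h_int_add : Integrable (fun x => 1 + ∑ a, d x a * S.r x a) S.ν := (integrable_const _).add h_int
  rw [lintegral_obsLaw S (by fun_prop)]
  calc _ ≤ ∫⁻ x, ENNReal.ofReal (1 + ∑ a, d x a * S.r x a) ∂S.ν := by
        refine lintegral_mono fun x => ?_
        rw [← hsum, ENNReal.ofReal_sum_of_nonneg fun a _ => hnn' x a]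
        exact Finset.sum_le_sum fun a _ => hinner x a
    _ = ENNReal.ofReal (∫ x, (1 + ∑ a, d x a * S.r x a) ∂S.ν) := by
        rw [ofReal_integral_eq_lintegral_ofReal h_int_add]
        filter_upwards with x
        rw [← hsum]
        exact Finset.sum_nonneg fun a _ => hnn' x a
    _ ≤ _ := by
        refine ENNReal.ofReal_le_ofReal ?_
        rw [integral_add (integrable_const _) h_int]
        have := Real.add_one_le_exp (∫ x, ∑ a, d x a * S.r x a ∂S.ν)
        simp only [integral_const, probReal_univ, smul_eq_mul, mul_one]
        linarith

/-- Chernoff bound for an i.i.d. sum of terms with exponential moment at most `exp B`. -/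
lemma dataLaw_tail_le (S : CBSetup 𝓧 𝓐) (n : ℕ) {h : 𝓧 × 𝓐 × ℝ → ℝ} (hh : Measurable h)
    {B : ℝ} (hB : ∫⁻ ω, ENNReal.ofReal (Real.exp (h ω)) ∂obsLaw S ≤ ENNReal.ofReal (Real.exp B))
    (L : ℝ) :
    dataLaw S n {D | n * B + L ≤ ∑ t, h (D t)} ≤ ENNReal.ofReal (Real.exp (-L)) := by
  have := isProbabilityMeasure_obsLaw S
  have hmeas : Measurable fun ω => ENNReal.ofReal (Real.exp (h ω)) := by fun_prop
  have hprod : ∫⁻ D, ∏ t, ENNReal.ofReal (Real.exp (h (D t))) ∂dataLaw S n =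
      ∏ _t : Fin n, ∫⁻ ω, ENNReal.ofReal (Real.exp (h ω)) ∂obsLaw S := by
    unfold dataLaw
    rw [lintegral_prod_eq_prod_lintegral_of_indepFun Finset.univ
      (fun (t : Fin n) (D : Fin n → 𝓧 × 𝓐 × ℝ) => ENNReal.ofReal (Real.exp (h (D t))))
      (iIndepFun_pi (X := fun _ ω => ENNReal.ofReal (Real.exp (h ω)))
        fun _ => hmeas.aemeasurable)
      fun t => hmeas.comp (measurable_pi_apply t)]
    refine Finset.prod_congr rfl fun t _ => ?_
    exact (measurePreserving_eval (fun _ : Fin n => obsLaw S) t).lintegral_comp hmeas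
  have hexp : ∀ D : Fin n → 𝓧 × 𝓐 × ℝ, ∏ t, ENNReal.ofReal (Real.exp (h (D t))) =
      ENNReal.ofReal (Real.exp (∑ t, h (D t))) := fun D => by
    rw [Real.exp_sum, ENNReal.ofReal_prod_of_nonneg fun t _ => (Real.exp_pos _).le]
  simp_rw [hexp] at hprod
  have hpos : 0 < Real.exp (n * B + L) := Real.exp_pos _
  calc dataLaw S n {D | n * B + L ≤ ∑ t, h (D t)}
      ≤ dataLaw S n {D | ENNReal.ofReal (Real.exp (n * B + L)) ≤
          ENNReal.ofReal (Real.exp (∑ t, h (D t)))} :=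
        measure_mono fun D hD => ENNReal.ofReal_le_ofReal (Real.exp_le_exp.2 hD)
    _ ≤ (∫⁻ D, ENNReal.ofReal (Real.exp (∑ t, h (D t))) ∂dataLaw S n) /
          ENNReal.ofReal (Real.exp (n * B + L)) :=
        meas_ge_le_lintegral_div (Measurable.aemeasurable (by fun_prop)) (by simpa using hpos) ENNReal.ofReal_ne_top
    _ ≤ ENNReal.ofReal (Real.exp (n * B)) / ENNReal.ofReal (Real.exp (n * B + L)) := by
        refine ENNReal.div_le_div_right ?_ _
        rw [hprod, Real.exp_nat_mul, ENNReal.ofReal_pow (Real.exp_pos _).le, Finset.prod_const,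
          Finset.card_univ, Fintype.card_fin]
        gcongr
    _ = ENNReal.ofReal (Real.exp (-L)) := by
        rw [← ENNReal.ofReal_div_of_pos hpos, ← Real.exp_sub]
        congr 2
        ring

/-! ### Pointwise inequalities -/

lemma mul_exp_ix_le {m γ p ρ : ℝ} (hm : 0 ≤ m) (hγ : 0 < γ) (hp0 : 0 ≤ p) (hp1 : p ≤ 1)
    (hρ : ρ ∈ Set.Icc (0 : ℝ) 1) :
    m * Real.exp (2 * γ * (p * ρ / (m + γ))) ≤ m + 2 * γ * p * ρ := by
  have hq0 : 0 ≤ p * ρ := mul_nonneg hp0 hρ.1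
  have hq1 : p * ρ ≤ 1 := mul_le_one₀ hp1 hρ.1 hρ.2
  rcases hm.eq_or_lt with rfl | hm
  · simp only [zero_mul, zero_add]
    nlinarith [mul_nonneg hγ.le hq0]
  have hz : 0 ≤ 2 * γ * (p * ρ) / m := by positivity
  -- With `z = 2γπρ/μ`, the quotient `2z/(z+2)` is `2γπρ/(μ + γπρ)`, and `πρ ≤ 1`.
  have h1 : 2 * γ * (p * ρ / (m + γ)) ≤
      2 * (2 * γ * (p * ρ) / m) / (2 * γ * (p * ρ) / m + 2) := by
    have e : 2 * (2 * γ * (p * ρ) / m) / (2 * γ * (p * ρ) / m + 2) =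
        2 * γ * (p * ρ) / (m + γ * (p * ρ)) := by
      have : 0 < m + γ * (p * ρ) := by positivity
      field_simp
      ring
    rw [e, ← mul_div_assoc]
    gcongr
    exact mul_le_of_le_one_right hγ.le hq1
  have h2 := h1.trans (Real.le_log_one_add_of_nonneg hz)
  have h3 : Real.exp (2 * γ * (p * ρ / (m + γ))) ≤ 1 + 2 * γ * (p * ρ) / m :=
    (Real.le_log_iff_exp_le (by positivity)).1 h2
  calc _ ≤ m * (1 + 2 * γ * (p * ρ) / m) := by gcongr
    _ = m + 2 * γ * p * ρ := by field_simp

lemma exp_neg_le_quadratic {y : ℝ} (hy : 0 ≤ y) : Real.exp (-y) ≤ 1 - y + y ^ 2 / 2 := by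
  have h := Real.quadratic_le_exp_of_nonneg hy
  rw [Real.exp_neg]
  refine inv_le_of_inv_le₀ (by nlinarith [sq_nonneg (y - 1)]) (le_trans ?_ h)
  -- `(1 - y + y²/2)(1 + y + y²/2) = 1 + y⁴/4`
  rw [inv_le_iff_one_le_mul₀ (by nlinarith [sq_nonneg (y - 1)])]
  nlinarith [sq_nonneg (y ^ 2)]

lemma mul_exp_neg_ix_le {m γ p ρ : ℝ} (hm : 0 ≤ m) (hγ : 0 < γ) (hp0 : 0 ≤ p) (hp1 : p ≤ 1)
    (hρ : ρ ∈ Set.Icc (0 : ℝ) 1) :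
    m * Real.exp (-2 * γ * (p * ρ / (m + γ))) ≤
      m + (-2 * γ * p + 4 * γ ^ 2 * (p / (m + γ))) * ρ := by
  have hq0 : 0 ≤ p * ρ := mul_nonneg hp0 hρ.1
  have hq1 : p * ρ ≤ 1 := mul_le_one₀ hp1 hρ.1 hρ.2
  have hmγ : 0 < m + γ := by positivity
  set u := p * ρ / (m + γ) with hu
  have hu0 : 0 ≤ u := by positivity
  have hpρ : p * ρ = u * (m + γ) := by rw [hu]; field_simp
  have h := exp_neg_le_quadratic (y := 2 * γ * u) (by positivity)
  -- The second moment is at most the coverage ratio: `μ u² ≤ u`, as `μ u ≤ (μ+γ) u = πρ ≤ 1`.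
  have hmu : m * u ≤ 1 := by nlinarith [mul_nonneg hγ.le hu0]
  have hmu2 : m * u ^ 2 ≤ u := by nlinarith
  calc m * Real.exp (-2 * γ * u) ≤ m * (1 - 2 * γ * u + (2 * γ * u) ^ 2 / 2) := by
        rw [show -2 * γ * u = -(2 * γ * u) by ring]
        gcongr
    _ = m - 2 * γ * (m * u) + 2 * γ ^ 2 * (m * u ^ 2) := by ring
    _ ≤ m - 2 * γ * (m * u) + 2 * γ ^ 2 * u := by gcongr
    _ = m - 2 * γ * (u * (m + γ)) + 4 * γ ^ 2 * u := by ring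
    _ = m + (-2 * γ * p + 4 * γ ^ 2 * (p / (m + γ))) * ρ := by
        rw [← hpρ, hu]
        ring

/-! ### Concentration of the IX estimator -/

lemma IsPolicy.le_one {π : 𝓧 → 𝓐 → ℝ} (hπ : IsPolicy π) (x : 𝓧) (a : 𝓐) : π x a ≤ 1 := by
  rw [← hπ.2.1 x]
  exact Finset.single_le_sum (fun b _ => hπ.1 x b) (Finset.mem_univ a)

lemma measurable_ixTerm (S : CBSetup 𝓧 𝓐) (γ : ℝ) {π : 𝓧 → 𝓐 → ℝ} (hπ : IsPolicy π) :
    Measurable (ixTerm S γ π) := by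
  have h1 : Measurable fun p : 𝓧 × 𝓐 => π p.1 p.2 := measurable_from_prod_countable_left hπ.2.2
  have h2 : Measurable fun p : 𝓧 × 𝓐 => S.μb p.1 p.2 := measurable_from_prod_countable_left S.μb_meas
  have h3 : Measurable fun ω : 𝓧 × 𝓐 × ℝ => (ω.1, ω.2.1) := by fun_prop
  exact ((h1.comp h3).mul (by fun_prop)).div ((h2.comp h3).add_const γ)

/-- The estimator overshoots `v(π)` by at least `L/(2γn)` with probability at most `exp (-L)`. -/
lemma dataLaw_upper_le (S : CBSetup 𝓧 𝓐) (n : ℕ) {γ : ℝ} (hγ : 0 < γ) {π : 𝓧 → 𝓐 → ℝ}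
    (hπ : IsPolicy π) (L : ℝ) :
    dataLaw S n {D | n * (2 * γ * pval S π) + L ≤ ∑ t, 2 * γ * ixTerm S γ π (D t)} ≤
      ENNReal.ofReal (Real.exp (-L)) := by
  refine dataLaw_tail_le S n (h := fun ω => 2 * γ * ixTerm S γ π ω)
    ((measurable_ixTerm S γ hπ).const_mul _) ?_ L
  have h := lintegral_exp_obsLaw_le S (h := fun ω => 2 * γ * ixTerm S γ π ω)
    ((measurable_ixTerm S γ hπ).const_mul _) (d := fun x a => 2 * γ * π x a)
    (fun a => (hπ.2.2 a).const_mul _) (M := 2 * γ)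
    (fun x a => by
      have := hπ.1 x a
      rw [abs_of_nonneg (by positivity)]
      exact mul_le_of_le_one_right (by positivity) (hπ.le_one x a))
    (fun x a ρ hρ => mul_exp_ix_le (S.μb_nonneg x a) hγ (hπ.1 x a) (hπ.le_one x a) hρ)
  refine h.trans_eq ?_
  simp_rw [mul_assoc (2 * γ), ← Finset.mul_sum]
  rw [integral_const_mul, pval]

/-- The estimator undershoots `v(π)` by at least `2γ C_γ(π) + L/(2γn)` with probability at most
`exp (-L)`. -/
lemma dataLaw_lower_le (S : CBSetup 𝓧 𝓐) (n : ℕ) {γ : ℝ} (hγ : 0 < γ) {π : 𝓧 → 𝓐 → ℝ}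
    (hπ : IsPolicy π) (L : ℝ) :
    dataLaw S n {D | n * (-2 * γ * pval S π + 4 * γ ^ 2 * covγ S γ π) + L ≤
      ∑ t, -2 * γ * ixTerm S γ π (D t)} ≤ ENNReal.ofReal (Real.exp (-L)) := by
  refine dataLaw_tail_le S n (h := fun ω => -2 * γ * ixTerm S γ π ω)
    ((measurable_ixTerm S γ hπ).const_mul _) ?_ L
  have habs : ∀ x a, |π x a| ≤ 1 := fun x a => by
    rw [abs_of_nonneg (hπ.1 x a)]
    exact hπ.le_one x a
  have habs' : ∀ x a, |π x a / (S.μb x a + γ)| ≤ 1 / γ := fun x a => by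
    have h0 := S.μb_nonneg x a
    have h1 := hπ.1 x a
    rw [abs_of_nonneg (by positivity)]
    gcongr
    · exact hπ.le_one x a
    · linarith
  have hm : ∀ a, Measurable fun x => π x a / (S.μb x a + γ) := fun a =>
    (hπ.2.2 a).div ((S.μb_meas a).add_const γ)
  have h := lintegral_exp_obsLaw_le S (h := fun ω => -2 * γ * ixTerm S γ π ω)
    ((measurable_ixTerm S γ hπ).const_mul _)
    (d := fun x a => -2 * γ * π x a + 4 * γ ^ 2 * (π x a / (S.μb x a + γ)))
    (fun a => ((hπ.2.2 a).const_mul _).add ((hm a).const_mul _)) (M := 2 * γ + 4 * γ ^ 2 * (1 / γ))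
    (fun x a => by
      refine (abs_add_le _ _).trans (add_le_add ?_ ?_)
      · rw [abs_mul, abs_of_neg (by linarith : -2 * γ < 0)]
        nlinarith [habs x a]
      · rw [abs_mul, abs_of_nonneg (by positivity : 0 ≤ 4 * γ ^ 2)]
        exact mul_le_mul_of_nonneg_left (habs' x a) (by positivity))
    (fun x a ρ hρ => mul_exp_neg_ix_le (S.μb_nonneg x a) hγ (hπ.1 x a) (hπ.le_one x a) hρ)
  refine h.trans_eq ?_
  have hsum : ∀ x, ∑ a, (-2 * γ * π x a + 4 * γ ^ 2 * (π x a / (S.μb x a + γ))) * S.r x a =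
      -2 * γ * ∑ a, π x a * S.r x a +
        4 * γ ^ 2 * ∑ a, π x a / (S.μb x a + γ) * S.r x a := fun x => by
    rw [Finset.mul_sum, Finset.mul_sum, ← Finset.sum_add_distrib]
    exact Finset.sum_congr rfl fun a _ => by ring
  simp_rw [hsum]
  rw [integral_add ((integrable_sum_mul_r S hπ.2.2 habs).const_mul _)
    ((integrable_sum_mul_r S hm habs').const_mul _), integral_const_mul, integral_const_mul,
    pval, covγ]
  simp_rw [div_mul_eq_mul_div]

/-- Theorem 1, first part: with probability at least `1-δ`, the PIWO-IX
policy `hatπ D = argmax_{π ∈ Pol} ṽ_n(π)` satisfies, simultaneously for every comparator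
`π' ∈ Pol`, `v(π') - v(hatπ D) ≤ log(2|Π|/δ)/(γn) + 2γ C_γ(π')`. -/
theorem piwo_ix_regret
    (S : CBSetup 𝓧 𝓐) {n : ℕ} (hn : 0 < n) (γ δ : ℝ) (hγ : 0 < γ)
    (hδ0 : 0 < δ) (hδ1 : δ < 1)
    (Pol : Finset (𝓧 → 𝓐 → ℝ)) (hne : Pol.Nonempty)
    (hpol : ∀ π ∈ Pol, IsPolicy π)
    (hatπ : (Fin n → 𝓧 × 𝓐 × ℝ) → 𝓧 → 𝓐 → ℝ)
    (hmem : ∀ D, hatπ D ∈ Pol)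
    (hmax : ∀ D, ∀ π ∈ Pol, ixEst S γ π D ≤ ixEst S γ (hatπ D) D) :
    ENNReal.ofReal (1 - δ) ≤
      dataLaw S n {D : Fin n → 𝓧 × 𝓐 × ℝ | ∀ π' ∈ Pol,
        pval S π' - pval S (hatπ D) ≤
          Real.log (2 * (Pol.card : ℝ) / δ) / (γ * n) + 2 * γ * covγ S γ π'} := by
  have hprob := isProbabilityMeasure_obsLaw S
  have : IsProbabilityMeasure (dataLaw S n) := by unfold dataLaw; infer_instance
  have hcard : (0 : ℝ) < Pol.card := by exact_mod_cast hne.card_pos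
  have hn' : (0 : ℝ) < n := by exact_mod_cast hn
  set L := Real.log (2 * (Pol.card : ℝ) / δ) with hL
  have hexpL : Real.exp (-L) = δ / (2 * Pol.card) := by
    rw [Real.exp_neg, hL, Real.exp_log (by positivity), inv_div]
  let up : (𝓧 → 𝓐 → ℝ) → Set (Fin n → 𝓧 × 𝓐 × ℝ) := fun π =>
    {D | n * (2 * γ * pval S π) + L ≤ ∑ t, 2 * γ * ixTerm S γ π (D t)}
  let lo : (𝓧 → 𝓐 → ℝ) → Set (Fin n → 𝓧 × 𝓐 × ℝ) := fun π =>
    {D | n * (-2 * γ * pval S π + 4 * γ ^ 2 * covγ S γ π) + L ≤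
      ∑ t, -2 * γ * ixTerm S γ π (D t)}
  let bad : Set (Fin n → 𝓧 × 𝓐 × ℝ) := ⋃ π ∈ Pol, up π ∪ lo π
  have hbad : dataLaw S n bad ≤ ENNReal.ofReal δ := by
    calc dataLaw S n bad ≤ ∑ π ∈ Pol, dataLaw S n (up π ∪ lo π) :=
          measure_biUnion_finset_le _ _
      _ ≤ ∑ _π ∈ Pol, ENNReal.ofReal (δ / Pol.card) := by
          refine Finset.sum_le_sum fun π hπ => (measure_union_le _ _).trans ?_
          refine (add_le_add (dataLaw_upper_le S n hγ (hpol π hπ) L)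
            (dataLaw_lower_le S n hγ (hpol π hπ) L)).trans_eq ?_
          rw [← ENNReal.ofReal_add (Real.exp_pos _).le (Real.exp_pos _).le, hexpL]
          congr 1
          field_simp
          norm_num
      _ = ENNReal.ofReal δ := by
          rw [Finset.sum_const, nsmul_eq_mul, ← ENNReal.ofReal_natCast,
            ← ENNReal.ofReal_mul hcard.le]
          congr 1
          field_simp
  have hbadm : MeasurableSet bad := by
    refine Finset.measurableSet_biUnion _ fun π hπ => ?_
    have hm := measurable_ixTerm S γ (hpol π hπ)
    have hsum : ∀ c : ℝ, Measurable fun D : Fin n → 𝓧 × 𝓐 × ℝ => ∑ t, c * ixTerm S γ π (D t) :=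
      fun c => by fun_prop
    exact (measurableSet_le measurable_const (hsum _)).union
      (measurableSet_le measurable_const (hsum _))
  -- The success event need not be measurable, as no measurability of `hatπ` is assumed;
  -- it contains the measurable event `badᶜ`.
  calc ENNReal.ofReal (1 - δ) = 1 - ENNReal.ofReal δ := by
        rw [ENNReal.ofReal_sub _ hδ0.le, ENNReal.ofReal_one]
    _ ≤ 1 - dataLaw S n bad := tsub_le_tsub_left hbad 1
    _ = dataLaw S n badᶜ := (prob_compl_eq_one_sub hbadm).symm
    _ ≤ _ := measure_mono ?_
  intro D hD π' hπ'
  simp only [bad, up, lo, Set.mem_compl_iff, Set.mem_iUnion, Set.mem_union, Set.mem_ofPred_eq,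
    not_exists, not_or, not_le, ← Finset.mul_sum] at hD
  have hest : ∀ π, ∑ t, ixTerm S γ π (D t) = n * ixEst S γ π D := fun π => by
    rw [ixEst]
    field_simp
  have h1 := (hD _ (hmem D)).1
  have h2 := (hD _ hπ').2
  rw [hest] at h1 h2
  have h3 : n * (2 * γ) * ixEst S γ π' D ≤ n * (2 * γ) * ixEst S γ (hatπ D) D :=
    mul_le_mul_of_nonneg_left (hmax D π' hπ') (by positivity)
  have h4 : (pval S π' - pval S (hatπ D) - 2 * γ * covγ S γ π') * (γ * n) ≤ L := by
    nlinarith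
  have h5 := (le_div_iff₀ (by positivity : 0 < γ * (n : ℝ))).2 h4
  linarith
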